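/- Let d ≥ 1, let Γ ⊆ ℕ^{1+d} be an admissible graded subsemigroup, and let Φ : Γ → ℝ be superadditive and linearly bounded, i.e. there is C > 0 with |Φ(m,α)| ≤ C·m on Γ. Set θ = limsup_{n→∞} sup_{α ∈ Γ_n} Φ(n,α)/n. Then the graded pieces Γ_k are nonempty for all sufficiently large k, the probability measures μ_k = (#Γ_k)^{-1} Σ_{α ∈ Γ_k} δ_{Φ(k,α)/k} on ℝ converge weakly to a compactly supported probability measure μ, and for every real t < θ one has μ([t,∞)) = vol(Δ(Γ^{Φ,≥t})) / vol(Δ(Γ)). -/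

import Mathlib

open scoped BigOperators
open Filter MeasureTheory
open scoped ENNReal NNReal

/-- Points of `ℕ^{1+d}`, written as a degree together with a vector in `ℕ^d`. -/
abbrev NPt (d : ℕ) := ℕ × (Fin d → ℕ)

/-- A subset of `ℕ^{1+d}` is a (graded) subsemigroup if it is closed under addition. -/
def IsGradedSubsemigroup {d : ℕ} (Γ : Set (NPt d)) : Prop :=
  ∀ x ∈ Γ, ∀ y ∈ Γ, x + y ∈ Γ

/-- Linear growth: there is `C > 0` with `|α|₁ ≤ C·m` for all `(m, α) ∈ Γ`. -/
def HasLinearGrowth {d : ℕ} (Γ : Set (NPt d)) : Prop :=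
  ∃ C : ℝ, 0 < C ∧ ∀ p ∈ Γ, (∑ i, (p.2 i : ℝ)) ≤ C * p.1

/-- The canonical embedding `ℕ^{1+d} → ℤ^{1+d}`. -/
def nptToInt {d : ℕ} (p : NPt d) : ℤ × (Fin d → ℤ) :=
  ((p.1 : ℤ), fun i => (p.2 i : ℤ))

/-- `Γ` generates `ℤ^{1+d}` as a group. -/
def GeneratesFullLattice {d : ℕ} (Γ : Set (NPt d)) : Prop :=
  AddSubgroup.closure (nptToInt '' Γ) = ⊤

/-- An admissible graded subsemigroup of `ℕ^{1+d}`. -/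
def IsAdmissible {d : ℕ} (Γ : Set (NPt d)) : Prop :=
  IsGradedSubsemigroup Γ ∧ HasLinearGrowth Γ ∧ GeneratesFullLattice Γ

/-- The canonical embedding `ℕ^{1+d} → ℝ^{1+d}`. -/
def nptToReal {d : ℕ} (p : NPt d) : ℝ × (Fin d → ℝ) :=
  ((p.1 : ℝ), fun i => (p.2 i : ℝ))

/-- The convex cone generated by a subset `S` of a real vector space: the set of finite
nonnegative linear combinations of elements of `S`. -/
def coneGen {E : Type*} [AddCommMonoid E] [Module ℝ E] (S : Set E) : Set E :=
  {y | ∃ (n : ℕ) (c : Fin n → ℝ) (p : Fin n → E),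
    (∀ i, 0 ≤ c i) ∧ (∀ i, p i ∈ S) ∧ y = ∑ i, c i • p i}

/-- The Okounkov body of a subset `Σ ⊆ ℕ^{1+d}`: the slice at height `1` of the closed convex
cone generated by `Σ` in `ℝ^{1+d}`. -/
def okounkovBody {d : ℕ} (S : Set (NPt d)) : Set (Fin d → ℝ) :=
  {x | ((1 : ℝ), x) ∈ closure (coneGen (nptToReal '' S))}

/-- The graded piece `Γ_m` of `Γ ⊆ ℕ^{1+d}`. -/
def gradedPiece {d : ℕ} (Γ : Set (NPt d)) (m : ℕ) : Set (Fin d → ℕ) :=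
  {α | (m, α) ∈ Γ}

/-- The superlevel semigroup `Γ^{Φ,≥t}` of a function `Φ` on `Γ`. -/
def superlevel {d : ℕ} (Γ : Set (NPt d)) (Φ : NPt d → ℝ) (t : ℝ) : Set (NPt d) :=
  {p ∈ Γ | p.1 * t ≤ Φ p}

/-- `θ = limsup_{n → ∞} sup_{α ∈ Γ_n} Φ(n,α)/n`. -/
noncomputable def thetaSup {d : ℕ} (Γ : Set (NPt d)) (Φ : NPt d → ℝ) : ℝ :=
  Filter.limsup (fun n : ℕ => sSup {r | ∃ α, (n, α) ∈ Γ ∧ r = Φ (n, α) / n}) Filter.atTop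


/-- The empirical measure `μ_k = (#Γ_k)⁻¹ Σ_{α ∈ Γ_k} δ_{Φ(k,α)/k}` on `ℝ`. -/
noncomputable def empiricalMeasure {d : ℕ} (Γ : Set (NPt d)) (Φ : NPt d → ℝ) (k : ℕ) :
    Measure ℝ :=
  (Nat.card {α : Fin d → ℕ // (k, α) ∈ Γ} : ℝ≥0∞)⁻¹ •
    Measure.sum (fun α : {α : Fin d → ℕ // (k, α) ∈ Γ} => Measure.dirac (Φ (k, α.1) / k))

/-!
The number of points of `Γ` in degree `k` is asymptotic to `vol(Δ(Γ)) k ^ d`: above, `Γ_k` embeds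
in the lattice points of `k Δ(Γ)`; below, `Γ` contains, up to a fixed shift, every lattice point of
the cone over any finite generating subset (Khovanskii), and such cones exhaust the volume.

By Fekete's argument `θ` is the supremum of the slopes `Φ(m,α)/m`. For `t < θ` the superlevel
semigroup is again admissible, because adding multiples of a point of slope `> t` moves every point
of `Γ` into it; for `t > θ` it is empty in positive degree. Hence the tails `μ_k([t,∞))`, which
count the superlevel semigroup relative to `Γ`, converge to the volume ratio for all `t ≠ θ`.

The ratio is the tail of a measure away from `θ` because it is left continuous there: if `q` has
slope `s > t > u`, contracting `Δ(Γ^{Φ,≥u})` towards the point `q` with ratio `(s-t)/(s-u)` lands in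
`Δ(Γ^{Φ,≥t})`. Convergence of tails on a dense set of levels gives weak convergence.
-/

section ConeSlices

variable {E : Type*} [AddCommGroup E] [Module ℝ E]

lemma nonneg_of_mem_hull {s : Set E} (f : E →ₗ[ℝ] ℝ)
    (hf : ∀ x ∈ s, 0 ≤ f x) {x : E} (hx : x ∈ PointedCone.hull ℝ s) : 0 ≤ f x :=
  have hle : PointedCone.hull ℝ s ≤ (PointedCone.positive ℝ ℝ).comap f := Submodule.span_le.2 hf
  hle hx

/-- The slice at height `1` of a convex cone in `ℝ × E`, viewed as a subset of `E`. -/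
def heightOneSlice (K : PointedCone ℝ (ℝ × E)) : Set E := {x | ((1 : ℝ), x) ∈ K}

lemma mem_heightOneSlice {K : PointedCone ℝ (ℝ × E)} {x : E} :
    x ∈ heightOneSlice K ↔ ((1 : ℝ), x) ∈ K := Iff.rfl

lemma heightOneSlice_mono {K L : PointedCone ℝ (ℝ × E)} (h : K ≤ L) :
    heightOneSlice K ⊆ heightOneSlice L :=
  fun _ hx => h hx

lemma convex_heightOneSlice (K : PointedCone ℝ (ℝ × E)) : Convex ℝ (heightOneSlice K) := by
  intro x hx y hy a b ha hb hab
  have h := K.convex hx hy ha hb hab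
  rwa [Prod.smul_mk, Prod.smul_mk, Prod.mk_add_mk, smul_eq_mul, smul_eq_mul, mul_one, mul_one,
    hab] at h

lemma inv_smul_mem_heightOneSlice_iff {K : PointedCone ℝ (ℝ × E)} {h : ℝ} (hh : 0 < h) {x : E} :
    h⁻¹ • x ∈ heightOneSlice K ↔ (h, x) ∈ K := by
  have hscale : h • ((1 : ℝ), h⁻¹ • x) = (h, x) := by
    rw [Prod.smul_mk, smul_inv_smul₀ hh.ne', smul_eq_mul, mul_one]
  refine ⟨fun hx => hscale ▸ K.smul_mem hh.le hx, fun hx => ?_⟩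
  rw [mem_heightOneSlice, ← inv_smul_smul₀ hh.ne' ((1 : ℝ), h⁻¹ • x), hscale]
  exact K.smul_mem (inv_nonneg.2 hh.le) hx

section Topological

variable [TopologicalSpace E] [IsTopologicalAddGroup E] [ContinuousSMul ℝ E]

lemma heightOneSlice_closure (K : PointedCone ℝ (ℝ × E)) :
    heightOneSlice K.closure = closure (heightOneSlice K) := by
  have hcont : Continuous fun x : E => ((1 : ℝ), x) := by fun_prop
  refine Set.Subset.antisymm (fun x hx => ?_) ?_
  · have hx : ((1 : ℝ), x) ∈ closure (K : Set (ℝ × E)) := hx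
    have hnorm : ContinuousAt (fun y : ℝ × E => y.1⁻¹ • y.2) (1, x) :=
      (continuousAt_fst.inv₀ one_ne_zero).smul continuousAt_snd
    have hpos : ∀ᶠ y : ℝ × E in nhds (1, x), 0 < y.1 :=
      continuousAt_fst.eventually (lt_mem_nhds one_pos)
    rw [mem_closure_iff_frequently] at hx ⊢
    have hlim : Tendsto (fun y : ℝ × E => y.1⁻¹ • y.2) (nhds (1, x)) (nhds x) := by
      simpa using hnorm.tendsto
    exact hlim.frequently <| (hx.and_eventually hpos).mono fun y hy =>
      (inv_smul_mem_heightOneSlice_iff hy.2).2 hy.1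
  · exact (isClosed_closure.preimage hcont).closure_subset_iff.2 fun x hx => subset_closure hx

end Topological

lemma interior_heightOneSlice_nonempty {E : Type*} [NormedAddCommGroup E] [NormedSpace ℝ E]
    [FiniteDimensional ℝ E] {K : PointedCone ℝ (ℝ × E)} (hK : ∀ x ∈ K, 0 ≤ x.1)
    (hspan : Submodule.span ℝ (K : Set (ℝ × E)) = ⊤) :
    (interior (heightOneSlice K)).Nonempty := by
  have haff : affineSpan ℝ (K : Set (ℝ × E)) = ⊤ := by
    have hzero : (0 : ℝ × E) ∈ (K : Set (ℝ × E)) := K.zero_mem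
    rw [← AffineSubspace.coe_eq_univ_iff, ← Set.insert_eq_of_mem hzero, affineSpan_insert_zero,
      hspan, Submodule.top_coe]
  obtain ⟨⟨h, x⟩, hx⟩ := K.convex.interior_nonempty_iff_affineSpan_eq_top.2 haff
  have hpos : 0 < h := by
    have := isOpenMap_fst.mapsTo_interior (s := (K : Set (ℝ × E))) (t := Set.Ici 0) hK hx
    rwa [interior_Ici] at this
  have hcont : Continuous fun y : E => (h, h • y) := by fun_prop
  let U : Set E := (fun y => (h, h • y)) ⁻¹' interior (K : Set (ℝ × E))
  have hU : U ⊆ heightOneSlice K := by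
    intro y hy
    have hy : (h, h • y) ∈ K := interior_subset hy
    simpa [inv_smul_smul₀ hpos.ne'] using (inv_smul_mem_heightOneSlice_iff hpos).2 hy
  refine ⟨h⁻¹ • x, interior_maximal hU (isOpen_interior.preimage hcont) ?_⟩
  simpa [U, smul_inv_smul₀ hpos.ne'] using hx

open PointedCone in
lemma exists_finset_lt_measure_heightOneSlice_hull {m : MeasurableSpace E} {μ : Measure E}
    {s : Set (ℝ × E)} (hs : s.Countable) {a : ℝ≥0∞} (ha : a < μ (heightOneSlice (hull ℝ s))) :
    ∃ T : Finset (ℝ × E), (T : Set (ℝ × E)) ⊆ s ∧ a < μ (heightOneSlice (hull ℝ T)) := by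
  have : Countable s := hs
  let slice (T : Finset s) : Set E := heightOneSlice (hull ℝ ((↑) '' (T : Set s)))
  have hmono : Monotone slice := fun T U hTU =>
    heightOneSlice_mono (Submodule.span_mono (Set.image_mono hTU))
  have hunion : heightOneSlice (hull ℝ s) ⊆ ⋃ T, slice T := by
    intro x hx
    obtain ⟨T, hTs, hxT⟩ := Submodule.mem_span_finite_of_mem_span hx
    classical
    have himage : (↑) '' (T.subtype (· ∈ s) : Set s) = (T : Set (ℝ × E)) := by
      ext y
      simpa using @hTs y
    refine Set.mem_iUnion.2 ⟨T.subtype (· ∈ s), ?_⟩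
    simp only [slice, himage]
    exact hxT
  have hlt := ha.trans_le (measure_mono hunion)
  rw [hmono.directed_le.measure_iUnion, lt_iSup_iff] at hlt
  obtain ⟨T, hT⟩ := hlt
  exact ⟨T.map (Function.Embedding.subtype _), by simp, by simpa [slice] using hT⟩

end ConeSlices

section LatticePoints

open scoped Pointwise

lemma tendsto_cofinite_cobounded_of_isometry {X Y : Type*} [PseudoMetricSpace X] [ProperSpace X]
    [DiscreteTopology X] [PseudoMetricSpace Y] {f : X → Y} (hf : Isometry f) :
    Tendsto f cofinite (Bornology.cobounded Y) := by
  rw [← cocompact_eq_cofinite, ← Metric.cobounded_eq_cocompact]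
  exact hf.antilipschitz.tendsto_cobounded

variable {ι : Type*}

/-- The lattice points of the `k`-th dilate of `s`. The dilate is encoded by dividing the lattice
points by `k`, so `k = 0` is a junk value. -/
def latticePoints (s : Set (ι → ℝ)) (k : ℕ) : Set (ι → ℤ) :=
  {α | (k : ℝ)⁻¹ • (fun i => (α i : ℝ)) ∈ s}

lemma latticePoints_mono {s t : Set (ι → ℝ)} (h : s ⊆ t) (k : ℕ) :
    latticePoints s k ⊆ latticePoints t k :=
  fun _ hα => h hα

lemma latticePoints_finite [Finite ι] {s : Set (ι → ℝ)} (hs : Bornology.IsBounded s) {k : ℕ}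
    (hk : k ≠ 0) : (latticePoints s k).Finite := by
  cases nonempty_fintype ι
  have hcast : Isometry fun (α : ι → ℤ) (i : ι) => (α i : ℝ) :=
    Isometry.piMap (fun _ => ((↑) : ℤ → ℝ)) fun _ => Real.isometry_intCast
  have hdilate : ∀ᶠ α : ι → ℤ in cofinite, (fun i => (α i : ℝ)) ∉ (k : ℝ) • s :=
    (tendsto_cofinite_cobounded_of_isometry hcast).eventually (hs.smul₀ (k : ℝ))
  refine (eventually_cofinite.1 hdilate).subset fun α hα => not_not_intro ?_
  exact (Set.mem_smul_set_iff_inv_smul_mem₀ (Nat.cast_ne_zero.2 hk) _ _).2 hα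

lemma coe_span_int_range_basisFun [Finite ι] :
    (Submodule.span ℤ (Set.range (Pi.basisFun ℝ ι)) : Set (ι → ℝ)) =
      Set.range fun (α : ι → ℤ) (i : ι) => (α i : ℝ) := by
  ext x
  simp only [SetLike.mem_coe, Module.Basis.mem_span_iff_repr_mem, Pi.basisFun_repr, Set.mem_range,
    eq_intCast, funext_iff, Classical.skolem]

lemma tendsto_card_latticePoints_div_pow [Fintype ι] {s : Set (ι → ℝ)}
    (hs : Bornology.IsBounded s) (hm : MeasurableSet s) (hf : volume (frontier s) = 0) :
    Tendsto (fun k : ℕ => (Nat.card (latticePoints s k) : ℝ) / (k : ℝ) ^ Fintype.card ι) atTop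
      (nhds (volume.real s)) := by
  refine (tendsto_card_div_pow_atTop_volume s hs hm hf).congr' ?_
  filter_upwards [eventually_ne_atTop 0] with k hk
  let point (α : ι → ℤ) : ι → ℝ := (k : ℝ)⁻¹ • fun i => (α i : ℝ)
  have hpoint : Function.Injective point :=
    (smul_right_injective _ (inv_ne_zero (Nat.cast_ne_zero.2 hk))).comp
      Int.cast_injective.comp_left
  have hlattice : (k : ℝ)⁻¹ • (Submodule.span ℤ (Set.range (Pi.basisFun ℝ ι)) : Set (ι → ℝ)) =
      Set.range point := by
    rw [coe_span_int_range_basisFun, ← Set.range_smul]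
  rw [hlattice, ← Set.image_preimage_eq_inter_range, Nat.card_image_of_injective hpoint]
  rfl

lemma tendsto_card_latticePoints_div_pow_of_convex [Fintype ι] {s : Set (ι → ℝ)}
    (hs : Bornology.IsBounded s) (hconv : Convex ℝ s) :
    Tendsto (fun k : ℕ => (Nat.card (latticePoints s k) : ℝ) / (k : ℝ) ^ Fintype.card ι) atTop
      (nhds (volume.real s)) := by
  have hnull : volume (frontier s) = 0 := hconv.addHaar_frontier volume
  have hinner := tendsto_card_latticePoints_div_pow (hs.subset interior_subset)
    isOpen_interior.measurableSet (hconv.interior.addHaar_frontier volume)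
  have houter := tendsto_card_latticePoints_div_pow hs.closure
    isClosed_closure.measurableSet (hconv.closure.addHaar_frontier volume)
  rw [measureReal_def, measure_interior_of_null_frontier hnull, ← measureReal_def] at hinner
  rw [measureReal_def, measure_closure_of_null_frontier hnull, ← measureReal_def] at houter
  refine tendsto_of_tendsto_of_tendsto_of_le_of_le' hinner houter ?_ ?_
  · filter_upwards [eventually_ne_atTop 0] with k hk
    gcongr
    exact Nat.card_mono (latticePoints_finite hs hk) (latticePoints_mono interior_subset k)
  · filter_upwards [eventually_ne_atTop 0] with k hk
    gcongr
    exact Nat.card_mono (latticePoints_finite hs.closure hk) (latticePoints_mono subset_closure k)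

end LatticePoints

section Conductor

variable {L : Type*} [AddCommGroup L] {S : Finset L}

lemma exists_sum_zsmul_eq_of_closure_eq_top (hgen : AddSubgroup.closure (S : Set L) = ⊤) (z : L) :
    ∃ n : L → ℤ, ∑ s ∈ S, n s • s = z := by
  have hz : z ∈ Submodule.span ℤ (S : Set L) := by
    rw [← Submodule.mem_toAddSubgroup, Submodule.span_int_eq_addSubgroupClosure, hgen]
    exact AddSubgroup.mem_top z
  obtain ⟨n, -, hn⟩ := Submodule.mem_span_finset.1 hz
  exact ⟨n, hn⟩

lemma exists_forall_add_nsmul_sum_eq_sum_nsmul (hgen : AddSubgroup.closure (S : Set L) = ⊤)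
    {R : Set L} (hR : R.Finite) :
    ∃ N : ℕ, ∀ r ∈ R, ∃ c : L → ℕ, r + N • ∑ s ∈ S, s = ∑ s ∈ S, c s • s := by
  choose n hn using exists_sum_zsmul_eq_of_closure_eq_top hgen
  obtain ⟨N, hN⟩ := (hR.image fun r => ∑ s ∈ S, (n r s).natAbs).bddAbove
  refine ⟨N, fun r hr => ⟨fun s => (n r s + N).toNat, ?_⟩⟩
  have hcoeff : ∀ s ∈ S, 0 ≤ n r s + N := by
    intro s hs
    have hle : (n r s).natAbs ≤ N :=
      (Finset.single_le_sum (f := fun s => (n r s).natAbs) (fun _ _ => Nat.zero_le _) hs).trans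
        (hN (Set.mem_image_of_mem _ hr))
    omega
  conv_lhs => rw [← hn r, Finset.smul_sum, ← Finset.sum_add_distrib]
  refine Finset.sum_congr rfl fun s hs => ?_
  rw [← natCast_zsmul, ← natCast_zsmul, ← add_zsmul, Int.toNat_of_nonneg (hcoeff s hs)]

variable {E : Type*} [NormedAddCommGroup E] [NormedSpace ℝ E] {φ : L →+ E}

lemma exists_norm_map_sub_sum_nsmul_le {z : L} (hz : φ z ∈ PointedCone.hull ℝ (φ '' S)) :
    ∃ m : L → ℕ, ‖φ (z - ∑ s ∈ S, m s • s)‖ ≤ ∑ s ∈ S, ‖φ s‖ := by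
  obtain ⟨c, hc⟩ := (Submodule.mem_span_image_finset_iff_exists_fun' _).1 hz
  refine ⟨fun s => ⌊(c s : ℝ)⌋₊, ?_⟩
  have hfract : φ (z - ∑ s ∈ S, ⌊(c s : ℝ)⌋₊ • s) =
      ∑ s ∈ S, ((c s : ℝ) - ⌊(c s : ℝ)⌋₊) • φ s := by
    simp only [map_sub, map_sum, map_nsmul, sub_smul, Finset.sum_sub_distrib,
      Nat.cast_smul_eq_nsmul, ← hc]
    rfl
  rw [hfract]
  refine norm_sum_le_of_le S fun s _ => ?_
  rw [norm_smul]
  refine mul_le_of_le_one_left (norm_nonneg _) (abs_le.2 ⟨?_, ?_⟩)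
  · linarith [Nat.floor_le (c s).2]
  · linarith [Nat.lt_floor_add_one (c s : ℝ)]

lemma succ_nsmul_mem_addSubsemigroup {M : Type*} [AddMonoid M] (A : AddSubsemigroup M) {x : M}
    (hx : x ∈ A) (n : ℕ) : (n + 1) • x ∈ A := by
  induction n with
  | zero => simpa using hx
  | succ n ih => exact succ_nsmul x (n + 1) ▸ A.add_mem ih hx

/-- Rounding down the coefficients of `z` leaves one of finitely many remainders, so a single
shift `γ` makes all of them nonnegative combinations of `S` (Khovanskii). -/
lemma exists_forall_mem_hull_add_mem (hφ : Tendsto φ cofinite (Bornology.cobounded E))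
    {A : AddSubsemigroup L} (hSA : (S : Set L) ⊆ A) (hne : S.Nonempty)
    (hgen : AddSubgroup.closure (S : Set L) = ⊤) :
    ∃ γ : L, ∀ z : L, φ z ∈ PointedCone.hull ℝ (φ '' S) → z + γ ∈ A := by
  have hfin : {r : L | ‖φ r‖ ≤ ∑ s ∈ S, ‖φ s‖}.Finite := by
    simpa using eventually_cofinite.1
      ((tendsto_norm_cobounded_atTop.comp hφ).eventually_gt_atTop (∑ s ∈ S, ‖φ s‖))
  obtain ⟨N, hN⟩ := exists_forall_add_nsmul_sum_eq_sum_nsmul hgen hfin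
  refine ⟨(N + 1) • ∑ s ∈ S, s, fun z hz => ?_⟩
  obtain ⟨m, hm⟩ := exists_norm_map_sub_sum_nsmul_le hz
  obtain ⟨c, hc⟩ := hN _ hm
  have hsum : z + (N + 1) • ∑ s ∈ S, s = ∑ s ∈ S, (m s + c s + 1) • s := by
    simp only [add_nsmul, one_nsmul, Finset.sum_add_distrib, ← hc]
    abel
  rw [hsum]
  exact Finset.sum_induction_nonempty _ (· ∈ A) (fun _ _ => A.add_mem) hne fun s hs =>
    succ_nsmul_mem_addSubsemigroup A (hSA hs) _

end Conductor

section OkounkovBody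

variable {d : ℕ} {S T : Set (NPt d)}

lemma nptToReal_add (p q : NPt d) : nptToReal (p + q) = nptToReal p + nptToReal q := by
  ext <;> simp [nptToReal]

lemma nptToReal_nsmul (n : ℕ) (p : NPt d) : nptToReal (n • p) = (n : ℝ) • nptToReal p := by
  ext <;> simp [nptToReal]

lemma nptToInt_add (p q : NPt d) : nptToInt (p + q) = nptToInt p + nptToInt q := by
  ext <;> simp [nptToInt]

/-- The convex cone in `ℝ^{1+d}` generated by a subset of `ℕ^{1+d}`, before taking the closure. -/
noncomputable def realCone (S : Set (NPt d)) : PointedCone ℝ (ℝ × (Fin d → ℝ)) :=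
  PointedCone.hull ℝ (nptToReal '' S)

lemma realCone_mono (h : S ⊆ T) : realCone S ≤ realCone T :=
  Submodule.span_mono (Set.image_mono h)

lemma nptToReal_mem_realCone {p : NPt d} (hp : p ∈ S) : nptToReal p ∈ realCone S :=
  PointedCone.subset_hull (Set.mem_image_of_mem _ hp)

lemma coneGen_eq_hull {E : Type*} [AddCommGroup E] [Module ℝ E] (s : Set E) :
    coneGen s = (PointedCone.hull ℝ s : Set E) := by
  ext y
  simp only [SetLike.mem_coe, PointedCone.hull, Submodule.mem_span_set', coneGen,
    Set.mem_ofPred_eq]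
  constructor
  · rintro ⟨n, c, p, hc, hp, rfl⟩
    exact ⟨n, fun i => ⟨c i, hc i⟩, fun i => ⟨p i, hp i⟩, rfl⟩
  · rintro ⟨n, c, p, rfl⟩
    exact ⟨n, fun i => c i, fun i => p i, fun i => (c i).2, fun i => (p i).2, rfl⟩

lemma okounkovBody_eq_heightOneSlice (S : Set (NPt d)) :
    okounkovBody S = heightOneSlice (realCone S).closure := by
  ext x
  rw [okounkovBody, coneGen_eq_hull]
  rfl

lemma okounkovBody_eq_closure (S : Set (NPt d)) :
    okounkovBody S = closure (heightOneSlice (realCone S)) := by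
  rw [okounkovBody_eq_heightOneSlice, heightOneSlice_closure]

lemma okounkovBody_mono (h : S ⊆ T) : okounkovBody S ⊆ okounkovBody T := by
  simpa only [okounkovBody_eq_closure] using closure_mono (heightOneSlice_mono (realCone_mono h))

lemma convex_okounkovBody (S : Set (NPt d)) : Convex ℝ (okounkovBody S) :=
  okounkovBody_eq_heightOneSlice S ▸ convex_heightOneSlice _

lemma volume_okounkovBody_eq_volume_heightOneSlice (S : Set (NPt d)) :
    volume (okounkovBody S) = volume (heightOneSlice (realCone S)) := by
  rw [okounkovBody_eq_closure]
  exact measure_closure_of_null_frontier ((convex_heightOneSlice _).addHaar_frontier _)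

lemma fst_nonneg_of_mem_realCone {x : ℝ × (Fin d → ℝ)} (hx : x ∈ realCone S) : 0 ≤ x.1 :=
  nonneg_of_mem_hull (LinearMap.fst ℝ ℝ _)
    (Set.forall_mem_image.2 fun p _ => Nat.cast_nonneg p.1) hx

lemma heightOneSlice_realCone_subset_Icc {C : ℝ}
    (hC : ∀ p ∈ S, ∑ i, (p.2 i : ℝ) ≤ C * p.1) :
    heightOneSlice (realCone S) ⊆ Set.Icc 0 fun _ => C := by
  refine fun x hx => ⟨fun i => ?_, fun i => ?_⟩
  · exact nonneg_of_mem_hull (LinearMap.proj i ∘ₗ LinearMap.snd ℝ ℝ _)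
      (Set.forall_mem_image.2 fun p _ => Nat.cast_nonneg (p.2 i)) hx
  · have hbound := nonneg_of_mem_hull
      (C • LinearMap.fst ℝ ℝ (Fin d → ℝ) - LinearMap.proj i ∘ₗ LinearMap.snd ℝ ℝ _)
      (Set.forall_mem_image.2 fun p hp => sub_nonneg.2 <|
        (Finset.single_le_sum (fun j _ => Nat.cast_nonneg (p.2 j)) (Finset.mem_univ i)).trans
          (hC p hp)) hx
    simpa using hbound

lemma isBounded_okounkovBody (hS : HasLinearGrowth S) : Bornology.IsBounded (okounkovBody S) := by
  obtain ⟨C, -, hC⟩ := hS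
  rw [okounkovBody_eq_closure]
  exact ((Metric.isBounded_Icc _ _).subset (heightOneSlice_realCone_subset_Icc hC)).closure

lemma volume_okounkovBody_ne_top (hS : HasLinearGrowth S) : volume (okounkovBody S) ≠ ⊤ :=
  (isBounded_okounkovBody hS).measure_lt_top.ne

/-- The inclusion of the lattice `ℤ^{1+d}` into `ℝ^{1+d}`. -/
def intToReal (d : ℕ) : ℤ × (Fin d → ℤ) →+ ℝ × (Fin d → ℝ) :=
  (Int.castAddHom ℝ).prodMap ((Int.castAddHom ℝ).compLeft (Fin d))

lemma intToReal_nptToInt (p : NPt d) : intToReal d (nptToInt p) = nptToReal p := by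
  ext <;> simp [intToReal, nptToInt, nptToReal]

lemma intToReal_image_nptToInt (S : Set (NPt d)) :
    intToReal d '' (nptToInt '' S) = nptToReal '' S := by
  simp only [Set.image_image, intToReal_nptToInt]

lemma tendsto_intToReal_cofinite_cobounded (d : ℕ) :
    Tendsto (intToReal d) cofinite (Bornology.cobounded _) :=
  tendsto_cofinite_cobounded_of_isometry <| Real.isometry_intCast.prodMap <|
    Isometry.piMap (fun _ : Fin d => ((↑) : ℤ → ℝ)) fun _ => Real.isometry_intCast

lemma span_range_intToReal (d : ℕ) : Submodule.span ℝ (Set.range (intToReal d)) = ⊤ := by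
  rw [eq_top_iff, ← ((Module.Basis.singleton Unit ℝ).prod (Pi.basisFun ℝ (Fin d))).span_eq]
  refine Submodule.span_mono ?_
  rintro _ ⟨_ | i, rfl⟩
  · exact ⟨(1, 0), by ext <;> simp [intToReal]⟩
  · exact ⟨(0, Pi.single i 1), by ext j <;> simp [intToReal, Pi.single_apply]⟩

lemma span_realCone_eq_top (hS : GeneratesFullLattice S) :
    Submodule.span ℝ (realCone S : Set (ℝ × (Fin d → ℝ))) = ⊤ := by
  set W := Submodule.span ℝ (realCone S : Set (ℝ × (Fin d → ℝ)))
  have hlattice : (⊤ : AddSubgroup _) ≤ W.toAddSubgroup.comap (intToReal d) := by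
    rw [← show _ = _ from hS, AddSubgroup.closure_le]
    rintro _ ⟨p, hp, rfl⟩
    exact Submodule.subset_span (intToReal_nptToInt p ▸ nptToReal_mem_realCone hp)
  rw [eq_top_iff, ← span_range_intToReal, Submodule.span_le]
  rintro _ ⟨z, rfl⟩
  exact hlattice (AddSubgroup.mem_top z)

lemma volume_okounkovBody_ne_zero (hS : GeneratesFullLattice S) :
    volume (okounkovBody S) ≠ 0 := by
  rw [volume_okounkovBody_eq_volume_heightOneSlice]
  have hint := interior_heightOneSlice_nonempty (fun _ => fst_nonneg_of_mem_realCone)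
    (span_realCone_eq_top hS)
  exact ((isOpen_interior.measure_pos _ hint).trans_le (measure_mono interior_subset)).ne'

lemma volume_real_okounkovBody_pos (hS : IsAdmissible S) : 0 < volume.real (okounkovBody S) :=
  ENNReal.toReal_pos (volume_okounkovBody_ne_zero hS.2.2) (volume_okounkovBody_ne_top hS.2.1)

lemma okounkovBody_eq_empty (hS : ∀ p ∈ S, p.1 = 0) : okounkovBody S = ∅ := by
  rw [okounkovBody_eq_closure, closure_empty_iff, Set.eq_empty_iff_forall_notMem]
  intro x hx
  have hle : 0 ≤ (-1 : ℝ) := nonneg_of_mem_hull (-LinearMap.fst ℝ ℝ (Fin d → ℝ))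
    (Set.forall_mem_image.2 fun p hp => by simp [nptToReal, hS p hp]) hx
  linarith

end OkounkovBody

section Counting

variable {d : ℕ} {S Γ : Set (NPt d)}

lemma mapsTo_gradedPiece_latticePoints (S : Set (NPt d)) {k : ℕ} (hk : k ≠ 0) :
    Set.MapsTo (fun (α : Fin d → ℕ) (i : Fin d) => (α i : ℤ)) (gradedPiece S k)
      (latticePoints (okounkovBody S) k) := by
  intro α hα
  rw [okounkovBody_eq_closure]
  refine subset_closure
    ((inv_smul_mem_heightOneSlice_iff (Nat.cast_pos.2 hk.bot_lt)).2 ?_)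
  simpa [nptToReal] using nptToReal_mem_realCone (S := S) hα

lemma injective_natCast_comp :
    Function.Injective fun (α : Fin d → ℕ) (i : Fin d) => (α i : ℤ) :=
  Nat.cast_injective.comp_left

lemma gradedPiece_finite (hS : HasLinearGrowth S) {k : ℕ} (hk : k ≠ 0) :
    (gradedPiece S k).Finite :=
  .of_injOn (mapsTo_gradedPiece_latticePoints S hk) injective_natCast_comp.injOn
    (latticePoints_finite (isBounded_okounkovBody hS) hk)

lemma card_gradedPiece_le (hS : HasLinearGrowth S) {k : ℕ} (hk : k ≠ 0) :
    Nat.card (gradedPiece S k) ≤ Nat.card (latticePoints (okounkovBody S) k) :=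
  Set.ncard_le_ncard_of_injOn _ (mapsTo_gradedPiece_latticePoints S hk)
    injective_natCast_comp.injOn (latticePoints_finite (isBounded_okounkovBody hS) hk)

lemma exists_forall_realCone_exists_mem (hΓ : IsGradedSubsemigroup Γ) {T : Finset (NPt d)}
    (hT : (T : Set (NPt d)) ⊆ Γ) (hgen : GeneratesFullLattice (T : Set (NPt d))) :
    ∃ γ : NPt d, ∀ z, intToReal d z ∈ realCone (T : Set (NPt d)) →
      ∃ p ∈ Γ, nptToInt p = z + nptToInt γ := by
  classical
  let A : AddSubsemigroup (ℤ × (Fin d → ℤ)) :=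
    { carrier := nptToInt '' Γ
      add_mem' := by
        rintro _ _ ⟨p, hp, rfl⟩ ⟨q, hq, rfl⟩
        exact ⟨p + q, hΓ p hp q hq, nptToInt_add p q⟩ }
  have hne : (T.image nptToInt).Nonempty := by
    rw [Finset.image_nonempty, Finset.nonempty_iff_ne_empty]
    rintro rfl
    simp [GeneratesFullLattice] at hgen
  obtain ⟨γ, hγ⟩ := exists_forall_mem_hull_add_mem (tendsto_intToReal_cofinite_cobounded d)
    (A := A) (S := T.image nptToInt) (by simpa [A] using Set.image_mono hT) hne
    (by simpa [GeneratesFullLattice] using hgen)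
  rw [Finset.coe_image, intToReal_image_nptToInt] at hγ
  have hγ₀ : 0 + γ ∈ A := hγ 0 (by simp)
  obtain ⟨p, -, rfl⟩ : γ ∈ nptToInt '' Γ := by rwa [zero_add] at hγ₀
  exact ⟨p, hγ⟩

lemma exists_forall_card_latticePoints_le (hΓ : IsGradedSubsemigroup Γ)
    (hgrowth : HasLinearGrowth Γ) {T : Finset (NPt d)} (hT : (T : Set (NPt d)) ⊆ Γ)
    (hgen : GeneratesFullLattice (T : Set (NPt d))) :
    ∃ m : ℕ, ∀ k ≠ 0, Nat.card (latticePoints (heightOneSlice (realCone (T : Set (NPt d)))) k) ≤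
      Nat.card (gradedPiece Γ (k + m)) := by
  obtain ⟨⟨m, γ⟩, hγ⟩ := exists_forall_realCone_exists_mem hΓ hT hgen
  refine ⟨m, fun k hk => ?_⟩
  have hmaps : ∀ α ∈ latticePoints (heightOneSlice (realCone (T : Set (NPt d)))) k,
      α + (fun i => (γ i : ℤ)) ∈ (fun β i => ((β i : ℕ) : ℤ)) '' gradedPiece Γ (k + m) := by
    intro α hα
    obtain ⟨⟨n, β⟩, hp, hβ⟩ := hγ ((k : ℤ), α) <| by
      simpa [intToReal] using (inv_smul_mem_heightOneSlice_iff (Nat.cast_pos.2 hk.bot_lt)).1 hα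
    obtain ⟨hn, hβ⟩ := Prod.ext_iff.1 hβ
    obtain rfl : n = k + m := Nat.cast_injective (R := ℤ) (hn.trans (Nat.cast_add k m).symm)
    exact ⟨β, hp, hβ⟩
  rw [← Nat.card_image_of_injective injective_natCast_comp (gradedPiece Γ (k + m))]
  exact Set.ncard_le_ncard_of_injOn _ hmaps (add_left_injective _).injOn
    ((gradedPiece_finite hgrowth (by omega)).image _)

lemma exists_finset_generatesFullLattice (hΓ : GeneratesFullLattice Γ) :
    ∃ T : Finset (NPt d), (T : Set (NPt d)) ⊆ Γ ∧ GeneratesFullLattice (T : Set (NPt d)) := by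
  classical
  have hfg : (Submodule.span ℤ (nptToInt '' Γ)).FG := IsNoetherian.noetherian _
  obtain ⟨R, hR, hspan⟩ := (Submodule.fg_span_iff_fg_span_finset_subset _).1 hfg
  obtain ⟨T, hT, rfl⟩ := Finset.subset_set_image_iff.1 hR
  refine ⟨T, hT, ?_⟩
  rw [GeneratesFullLattice, ← hΓ, ← Submodule.span_int_eq_addSubgroupClosure,
    ← Submodule.span_int_eq_addSubgroupClosure, hspan, Finset.coe_image]

lemma exists_finset_generatesFullLattice_lt_volume (hΓ : GeneratesFullLattice Γ) {a : ℝ≥0∞}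
    (ha : a < volume (okounkovBody Γ)) :
    ∃ T : Finset (NPt d), (T : Set (NPt d)) ⊆ Γ ∧ GeneratesFullLattice (T : Set (NPt d)) ∧
      a < volume (okounkovBody (T : Set (NPt d))) := by
  classical
  obtain ⟨T, hT, hgen⟩ := exists_finset_generatesFullLattice hΓ
  rw [volume_okounkovBody_eq_volume_heightOneSlice] at ha
  obtain ⟨R, hR, hlt⟩ := exists_finset_lt_measure_heightOneSlice_hull
    ((Set.to_countable Γ).image nptToReal) ha
  obtain ⟨U, hU, rfl⟩ := Finset.subset_set_image_iff.1 hR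
  refine ⟨T ∪ U, by simp [hT, hU], ?_, ?_⟩
  · exact eq_top_mono (AddSubgroup.closure_mono (Set.image_mono (by simp))) hgen
  · rw [Finset.coe_image, ← realCone, ← volume_okounkovBody_eq_volume_heightOneSlice] at hlt
    exact hlt.trans_le (measure_mono (okounkovBody_mono (by simp)))

lemma eventually_lt_card_gradedPiece_div_pow (hΓ : IsAdmissible Γ) {a : ℝ}
    (ha : a < volume.real (okounkovBody Γ)) :
    ∀ᶠ k : ℕ in atTop, a < (Nat.card (gradedPiece Γ k) : ℝ) / (k : ℝ) ^ d := by
  obtain ⟨hadd, hgrowth, hgen⟩ := hΓ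
  rcases lt_or_ge a 0 with hneg | hnonneg
  · exact .of_forall fun k => hneg.trans_le (by positivity)
  obtain ⟨T, hT, hTgen, hvol⟩ := exists_finset_generatesFullLattice_lt_volume hgen
    ((ENNReal.ofReal_lt_iff_lt_toReal hnonneg (volume_okounkovBody_ne_top hgrowth)).2 ha)
  have hbdd : Bornology.IsBounded (okounkovBody (T : Set (NPt d))) :=
    (isBounded_okounkovBody hgrowth).subset (okounkovBody_mono hT)
  rw [ENNReal.ofReal_lt_iff_lt_toReal hnonneg hbdd.measure_lt_top.ne,
    volume_okounkovBody_eq_volume_heightOneSlice] at hvol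
  obtain ⟨m, hm⟩ := exists_forall_card_latticePoints_le hadd hgrowth hT hTgen
  have hcount := tendsto_card_latticePoints_div_pow_of_convex
    (hbdd.subset (okounkovBody_eq_closure (T : Set (NPt d)) ▸ subset_closure))
    (convex_heightOneSlice _)
  have hshift : Tendsto (fun k : ℕ => ((k : ℝ) / (k + m)) ^ d) atTop (nhds 1) := by
    simpa using (tendsto_natCast_div_add_atTop (m : ℝ)).pow d
  have hlim := hcount.mul hshift
  rw [mul_one, Fintype.card_fin] at hlim
  rw [← map_add_atTop_eq_nat m, eventually_map]
  filter_upwards [hlim.eventually_const_lt hvol, eventually_ne_atTop 0] with k hlt hk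
  have hk' : (k : ℝ) ≠ 0 := Nat.cast_ne_zero.2 hk
  rw [div_pow, div_mul_div_cancel₀ (pow_ne_zero d hk')] at hlt
  refine hlt.trans_le ?_
  push_cast
  gcongr
  exact hm k hk

lemma eventually_card_gradedPiece_div_pow_lt (hS : HasLinearGrowth S) {b : ℝ}
    (hb : volume.real (okounkovBody S) < b) :
    ∀ᶠ k : ℕ in atTop, (Nat.card (gradedPiece S k) : ℝ) / (k : ℝ) ^ d < b := by
  have hlim := tendsto_card_latticePoints_div_pow_of_convex (isBounded_okounkovBody hS)
    (convex_okounkovBody S)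
  rw [Fintype.card_fin] at hlim
  filter_upwards [hlim.eventually_lt_const hb, eventually_ne_atTop 0] with k hlt hk
  refine lt_of_le_of_lt ?_ hlt
  gcongr
  exact card_gradedPiece_le hS hk

theorem tendsto_card_gradedPiece_div_pow (hΓ : IsAdmissible Γ) :
    Tendsto (fun k : ℕ => (Nat.card (gradedPiece Γ k) : ℝ) / (k : ℝ) ^ d) atTop
      (nhds (volume.real (okounkovBody Γ))) :=
  tendsto_order.2 ⟨fun _ => eventually_lt_card_gradedPiece_div_pow hΓ,
    fun _ => eventually_card_gradedPiece_div_pow_lt hΓ.2.1⟩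

lemma eventually_gradedPiece_nonempty (hΓ : IsAdmissible Γ) :
    ∀ᶠ k in atTop, (gradedPiece Γ k).Nonempty := by
  filter_upwards [eventually_lt_card_gradedPiece_div_pow hΓ (volume_real_okounkovBody_pos hΓ)]
    with k hk
  rw [Set.nonempty_iff_ne_empty]
  intro hempty
  simp [hempty] at hk

end Counting

section Superadditive

variable {d : ℕ} {Γ : Set (NPt d)} {Φ : NPt d → ℝ} {p q : NPt d} {s t u : ℝ}

/-- Superadditivity of a function on a subset of `ℕ^{1+d}`. -/
def IsSuperadditiveOn (Γ : Set (NPt d)) (Φ : NPt d → ℝ) : Prop :=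
  ∀ x ∈ Γ, ∀ y ∈ Γ, Φ x + Φ y ≤ Φ (x + y)

/-- Linear boundedness: `Φ` is bounded on `Γ` by a multiple of the degree. -/
def IsLinearlyBoundedOn (Γ : Set (NPt d)) (Φ : NPt d → ℝ) : Prop :=
  ∃ C : ℝ, 0 < C ∧ ∀ p ∈ Γ, |Φ p| ≤ C * p.1

lemma superlevel_subset (t : ℝ) : superlevel Γ Φ t ⊆ Γ := fun _ hp => hp.1

lemma superlevel_antitone : Antitone (superlevel Γ Φ) := fun _ _ hst p hp =>
  ⟨hp.1, (mul_le_mul_of_nonneg_left hst p.1.cast_nonneg).trans hp.2⟩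

lemma isGradedSubsemigroup_superlevel (hadd : IsGradedSubsemigroup Γ)
    (hΦ : IsSuperadditiveOn Γ Φ) (t : ℝ) : IsGradedSubsemigroup (superlevel Γ Φ t) := by
  rintro p ⟨hp, htp⟩ q ⟨hq, htq⟩
  refine ⟨hadd p hp q hq, ?_⟩
  rw [Prod.fst_add, Nat.cast_add, add_mul]
  exact (add_le_add htp htq).trans (hΦ p hp q hq)

lemma succ_nsmul_mem_superlevel (hadd : IsGradedSubsemigroup Γ) (hΦ : IsSuperadditiveOn Γ Φ)
    (hp : p ∈ superlevel Γ Φ t) (n : ℕ) : (n + 1) • p ∈ superlevel Γ Φ t :=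
  have hsub := isGradedSubsemigroup_superlevel hadd hΦ t
  succ_nsmul_mem_addSubsemigroup ⟨superlevel Γ Φ t, fun hx hy => hsub _ hx _ hy⟩ hp n

lemma hasLinearGrowth_superlevel (hgrowth : HasLinearGrowth Γ) (t : ℝ) :
    HasLinearGrowth (superlevel Γ Φ t) := by
  obtain ⟨C, hC, hbound⟩ := hgrowth
  exact ⟨C, hC, fun p hp => hbound p hp.1⟩

lemma superlevel_eq {C : ℝ} (hC : ∀ p ∈ Γ, |Φ p| ≤ C * p.1) (ht : t ≤ -C) :
    superlevel Γ Φ t = Γ := by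
  refine (superlevel_subset t).antisymm fun p hp => ⟨hp, ?_⟩
  have hmul := mul_le_mul_of_nonneg_left ht p.1.cast_nonneg
  linarith [neg_le_of_abs_le (hC p hp)]

lemma nsmul_add_nsmul_mem_superlevel (hadd : IsGradedSubsemigroup Γ)
    (hΦ : IsSuperadditiveOn Γ Φ) (hp : p ∈ superlevel Γ Φ u) (hq : q ∈ superlevel Γ Φ s)
    {m n : ℕ} (hm : m ≠ 0) (hn : n ≠ 0) (h : m * p.1 * (t - u) ≤ n * q.1 * (s - t)) :
    m • p + n • q ∈ superlevel Γ Φ t := by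
  obtain ⟨m, rfl⟩ := Nat.exists_eq_succ_of_ne_zero hm
  obtain ⟨n, rfl⟩ := Nat.exists_eq_succ_of_ne_zero hn
  obtain ⟨hmp, hmpu⟩ := succ_nsmul_mem_superlevel hadd hΦ hp m
  obtain ⟨hnq, hnqs⟩ := succ_nsmul_mem_superlevel hadd hΦ hq n
  refine ⟨hadd _ hmp _ hnq, ?_⟩
  have hsum := hΦ _ hmp _ hnq
  simp only [Prod.fst_add, Prod.smul_fst, smul_eq_mul, Nat.cast_add, Nat.cast_mul,
    Nat.succ_eq_add_one] at hmpu hnqs h ⊢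
  linarith

lemma mem_superlevel_div (hp : p ∈ Γ) (hpos : 0 < p.1) : p ∈ superlevel Γ Φ (Φ p / p.1) :=
  ⟨hp, (mul_div_cancel₀ _ (Nat.cast_ne_zero.2 hpos.ne')).le⟩

lemma mem_superlevel_iff_le_div (hpos : 0 < p.1) :
    p ∈ superlevel Γ Φ t ↔ p ∈ Γ ∧ t ≤ Φ p / p.1 := by
  rw [le_div_iff₀' (Nat.cast_pos.2 hpos)]
  rfl

lemma abs_div_le {C : ℝ} (hC₀ : 0 ≤ C) (hC : ∀ p ∈ Γ, |Φ p| ≤ C * p.1) (hp : p ∈ Γ) :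
    |Φ p / p.1| ≤ C := by
  rw [abs_div, Nat.abs_cast]
  exact div_le_of_le_mul₀ p.1.cast_nonneg hC₀ (hC p hp)

/-- Fekete's argument: superadditivity turns the limsup into a supremum. -/
lemma isLUB_thetaSup (hadd : IsGradedSubsemigroup Γ)
    (hne : ∀ᶠ k in atTop, (gradedPiece Γ k).Nonempty) (hΦ : IsSuperadditiveOn Γ Φ)
    (hbdd : IsLinearlyBoundedOn Γ Φ) :
    IsLUB ((fun p : NPt d => Φ p / p.1) '' {p ∈ Γ | 0 < p.1}) (thetaSup Γ Φ) := by
  obtain ⟨C, hC₀, hC⟩ := hbdd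
  have habs := fun p => abs_div_le (p := p) hC₀.le hC
  let slopes (n : ℕ) : Set ℝ := {r | ∃ α, (n, α) ∈ Γ ∧ r = Φ (n, α) / n}
  have hslopes_le : ∀ n, ∀ r ∈ slopes n, r ≤ C := by
    rintro n _ ⟨α, hα, rfl⟩
    exact le_of_abs_le (habs _ hα)
  have hle : ∀ p ∈ Γ, Φ p / p.1 ≤ sSup (slopes p.1) := fun p hp =>
    le_csSup ⟨C, hslopes_le p.1⟩ ⟨p.2, hp, rfl⟩
  refine ⟨?_, fun b hb => ?_⟩
  · rintro _ ⟨p, ⟨hp, hpos⟩, rfl⟩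
    refine le_limsup_of_frequently_le (frequently_atTop.2 fun N => ?_)
      (isBoundedUnder_of ⟨C, fun n => Real.sSup_le (hslopes_le n) hC₀.le⟩)
    have hmem := succ_nsmul_mem_superlevel hadd hΦ (mem_superlevel_div hp hpos) N
    refine ⟨((N + 1) • p).1, ?_, ?_⟩
    · simp only [Prod.smul_fst, smul_eq_mul]
      nlinarith
    · exact ((mem_superlevel_iff_le_div (by simpa using hpos)).1 hmem).2.trans (hle _ hmem.1)
  · refine limsup_le_of_le ?_ ?_
    · refine isCoboundedUnder_le_of_eventually_le _ (x := -C) (hne.mono fun n ⟨α, hα⟩ => ?_)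
      exact (neg_le_of_abs_le (habs _ hα)).trans (hle (n, α) hα)
    · filter_upwards [hne, eventually_gt_atTop 0] with n ⟨α, hα⟩ hn
      refine csSup_le ⟨_, α, hα, rfl⟩ ?_
      rintro _ ⟨β, hβ, rfl⟩
      exact hb ⟨(n, β), ⟨hβ, hn⟩, rfl⟩

lemma exists_lt_div_of_lt_thetaSup (hΓ : IsAdmissible Γ) (hΦ : IsSuperadditiveOn Γ Φ)
    (hbdd : IsLinearlyBoundedOn Γ Φ) (ht : t < thetaSup Γ Φ) :
    ∃ q ∈ Γ, 0 < q.1 ∧ t < Φ q / q.1 := by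
  have hlub := isLUB_thetaSup hΓ.1 (eventually_gradedPiece_nonempty hΓ) hΦ hbdd
  obtain ⟨_, ⟨q, ⟨hq, hpos⟩, rfl⟩, htq⟩ := (lt_isLUB_iff hlub).1 ht
  exact ⟨q, hq, hpos, htq⟩

lemma fst_eq_zero_of_mem_superlevel (hΓ : IsAdmissible Γ) (hΦ : IsSuperadditiveOn Γ Φ)
    (hbdd : IsLinearlyBoundedOn Γ Φ) (ht : thetaSup Γ Φ < t) (hp : p ∈ superlevel Γ Φ t) :
    p.1 = 0 := by
  have hlub := isLUB_thetaSup hΓ.1 (eventually_gradedPiece_nonempty hΓ) hΦ hbdd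
  by_contra hne
  have hpos : 0 < p.1 := Nat.pos_of_ne_zero hne
  exact ht.not_ge <| ((mem_superlevel_iff_le_div hpos).1 hp).2.trans
    (hlub.1 ⟨p, ⟨hp.1, hpos⟩, rfl⟩)

lemma generatesFullLattice_superlevel (hΓ : IsAdmissible Γ) (hΦ : IsSuperadditiveOn Γ Φ)
    (hbdd : IsLinearlyBoundedOn Γ Φ) (hq : q ∈ superlevel Γ Φ s) (hpos : 0 < q.1) (hts : t < s) :
    GeneratesFullLattice (superlevel Γ Φ t) := by
  obtain ⟨hadd, -, hgen⟩ := hΓ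
  obtain ⟨C, -, hC⟩ := hbdd
  rw [GeneratesFullLattice, eq_top_iff, ← hgen, AddSubgroup.closure_le]
  rintro _ ⟨p, hp, rfl⟩
  obtain ⟨n, hn⟩ := exists_nat_ge (p.1 * (t + C) / (q.1 * (s - t)))
  have hslope : 0 < q.1 * (s - t) := mul_pos (Nat.cast_pos.2 hpos) (sub_pos.2 hts)
  rw [div_le_iff₀ hslope] at hn
  have hpC : p ∈ superlevel Γ Φ (-C) := (superlevel_eq hC le_rfl).ge hp
  have hsum : p + (n + 1) • q ∈ superlevel Γ Φ t := by
    rw [← one_nsmul p]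
    exact nsmul_add_nsmul_mem_superlevel hadd hΦ hpC hq one_ne_zero n.succ_ne_zero
      (by push_cast; linarith)
  have hq' : (n + 1) • q ∈ superlevel Γ Φ t :=
    succ_nsmul_mem_superlevel hadd hΦ (superlevel_antitone hts.le hq) n
  have hdiff : nptToInt p = nptToInt (p + (n + 1) • q) - nptToInt ((n + 1) • q) := by
    rw [nptToInt_add, add_sub_cancel_right]
  rw [SetLike.mem_coe, hdiff]
  exact sub_mem (AddSubgroup.subset_closure (Set.mem_image_of_mem _ hsum))
    (AddSubgroup.subset_closure (Set.mem_image_of_mem _ hq'))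

lemma isAdmissible_superlevel (hΓ : IsAdmissible Γ) (hΦ : IsSuperadditiveOn Γ Φ)
    (hbdd : IsLinearlyBoundedOn Γ Φ) (ht : t < thetaSup Γ Φ) :
    IsAdmissible (superlevel Γ Φ t) := by
  obtain ⟨q, hq, hpos, htq⟩ := exists_lt_div_of_lt_thetaSup hΓ hΦ hbdd ht
  exact ⟨isGradedSubsemigroup_superlevel hΓ.1 hΦ t, hasLinearGrowth_superlevel hΓ.2.1 t,
    generatesFullLattice_superlevel hΓ hΦ hbdd (mem_superlevel_div hq hpos) hpos htq⟩

end Superadditive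

section LeftContinuity

variable {d : ℕ} {Γ : Set (NPt d)} {Φ : NPt d → ℝ} {p q : NPt d} {s t u : ℝ}

lemma nptToReal_add_smul_mem_closure_realCone (hadd : IsGradedSubsemigroup Γ)
    (hΦ : IsSuperadditiveOn Γ Φ) (hp : p ∈ superlevel Γ Φ u) (hq : q ∈ superlevel Γ Φ s)
    (hts : t ≤ s) {ρ : ℝ} (hρ₀ : 0 ≤ ρ) (hρ : p.1 * (t - u) ≤ ρ * q.1 * (s - t)) :
    nptToReal p + ρ • nptToReal q ∈ (realCone (superlevel Γ Φ t)).closure := by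
  have hcoeff : Tendsto (fun m : ℕ => (⌊ρ * m⌋₊ + 1 : ℝ) / m) atTop (nhds ρ) := by
    simpa [add_div] using ((tendsto_nat_floor_mul_div_atTop hρ₀).comp
      tendsto_natCast_atTop_atTop).add (tendsto_one_div_atTop_nhds_zero_nat (𝕜 := ℝ))
  have hlim : Tendsto (fun m : ℕ => nptToReal p + ((⌊ρ * m⌋₊ + 1 : ℝ) / m) • nptToReal q) atTop
      (nhds (nptToReal p + ρ • nptToReal q)) :=
    tendsto_const_nhds.add (hcoeff.smul_const _)
  refine mem_closure_of_tendsto hlim ?_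
  filter_upwards [eventually_ne_atTop 0] with m hm
  have hm' : (m : ℝ) ≠ 0 := Nat.cast_ne_zero.2 hm
  have hweights : m * p.1 * (t - u) ≤ (⌊ρ * m⌋₊ + 1 : ℕ) * q.1 * (s - t) := by
    have hfloor : ρ * m ≤ (⌊ρ * m⌋₊ + 1 : ℕ) := by exact_mod_cast (Nat.lt_floor_add_one _).le
    calc m * p.1 * (t - u) = m * (p.1 * (t - u)) := mul_assoc _ _ _
      _ ≤ m * (ρ * q.1 * (s - t)) := by gcongr
      _ = ρ * m * (q.1 * (s - t)) := by ring
      _ ≤ (⌊ρ * m⌋₊ + 1 : ℕ) * (q.1 * (s - t)) := by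
        gcongr
      _ = (⌊ρ * m⌋₊ + 1 : ℕ) * q.1 * (s - t) := (mul_assoc _ _ _).symm
  have hmem := nptToReal_mem_realCone <| nsmul_add_nsmul_mem_superlevel hadd hΦ hp hq hm
    (Nat.succ_ne_zero ⌊ρ * m⌋₊) hweights
  have hscale : nptToReal p + ((⌊ρ * m⌋₊ + 1 : ℝ) / m) • nptToReal q =
      (m : ℝ)⁻¹ • nptToReal (m • p + (⌊ρ * m⌋₊ + 1) • q) := by
    rw [nptToReal_add, nptToReal_nsmul, nptToReal_nsmul, smul_add, inv_smul_smul₀ hm', smul_smul]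
    push_cast
    rw [div_eq_inv_mul]
  rw [hscale]
  exact PointedCone.smul_mem _ (inv_nonneg.2 m.cast_nonneg) hmem

/-- The coefficient of `q` is the smallest for which slope at least `u` at `y` and slope `s` at `q`
average to slope at least `t`. -/
lemma add_smul_mem_closure_realCone (hadd : IsGradedSubsemigroup Γ) (hΦ : IsSuperadditiveOn Γ Φ)
    (hq : q ∈ superlevel Γ Φ s) (hpos : 0 < q.1) (hut : u ≤ t) (hts : t < s)
    {y : ℝ × (Fin d → ℝ)} (hy : y ∈ realCone (superlevel Γ Φ u)) :
    y + (y.1 * ((t - u) / (q.1 * (s - t)))) • nptToReal q ∈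
      (realCone (superlevel Γ Φ t)).closure := by
  have hq₀ : (q.1 : ℝ) ≠ 0 := Nat.cast_ne_zero.2 hpos.ne'
  have hst : 0 < s - t := sub_pos.2 hts
  let shear : ℝ × (Fin d → ℝ) →ₗ[ℝ] ℝ × (Fin d → ℝ) :=
    .id + (LinearMap.fst ℝ ℝ _).smulRight (((t - u) / (q.1 * (s - t))) • nptToReal q)
  have hshear : ∀ y, shear y = y + (y.1 * ((t - u) / (q.1 * (s - t)))) • nptToReal q := fun y => by
    simp [shear, smul_smul]
  have hle : realCone (superlevel Γ Φ u) ≤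
      (realCone (superlevel Γ Φ t)).closure.comap shear := by
    refine Submodule.span_le.2 (Set.forall_mem_image.2 fun p hp => ?_)
    change shear (nptToReal p) ∈ (realCone (superlevel Γ Φ t)).closure
    rw [hshear]
    refine nptToReal_add_smul_mem_closure_realCone hadd hΦ hp hq hts.le ?_ (le_of_eq ?_)
    · exact mul_nonneg p.1.cast_nonneg (div_nonneg (sub_nonneg.2 hut) (by positivity))
    · simp only [nptToReal]
      field_simp
  exact hshear y ▸ hle hy

lemma homothety_image_heightOneSlice_subset (hadd : IsGradedSubsemigroup Γ)
    (hΦ : IsSuperadditiveOn Γ Φ) (hq : q ∈ superlevel Γ Φ s) (hpos : 0 < q.1) (hut : u ≤ t)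
    (hts : t < s) :
    AffineMap.homothety ((q.1 : ℝ)⁻¹ • (nptToReal q).2) ((s - t) / (s - u)) ''
      heightOneSlice (realCone (superlevel Γ Φ u)) ⊆ okounkovBody (superlevel Γ Φ t) := by
  rintro _ ⟨x, hx, rfl⟩
  have hq₀ : (q.1 : ℝ) ≠ 0 := Nat.cast_ne_zero.2 hpos.ne'
  have hst : s - t ≠ 0 := (sub_pos.2 hts).ne'
  have hsu : 0 < s - u := by linarith
  have hmem := PointedCone.smul_mem _ (div_nonneg (sub_pos.2 hts).le hsu.le)
    (add_smul_mem_closure_realCone hadd hΦ hq hpos hut hts hx)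
  rw [okounkovBody_eq_heightOneSlice, mem_heightOneSlice]
  convert hmem using 1
  ext i
  · simp only [nptToReal, one_mul, Prod.smul_mk, Prod.mk_add_mk, smul_eq_mul]
    field_simp
    ring
  · simp only [nptToReal, one_mul, Prod.smul_mk, Prod.mk_add_mk, smul_eq_mul,
      AffineMap.homothety_apply, vsub_eq_sub, vadd_eq_add, Pi.add_apply, Pi.smul_apply,
      Pi.sub_apply]
    field_simp
    ring

lemma pow_mul_volume_real_okounkovBody_superlevel_le (hadd : IsGradedSubsemigroup Γ)
    (hgrowth : HasLinearGrowth Γ) (hΦ : IsSuperadditiveOn Γ Φ) (hq : q ∈ superlevel Γ Φ s)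
    (hpos : 0 < q.1) (hut : u ≤ t) (hts : t < s) :
    ((s - t) / (s - u)) ^ d * volume.real (okounkovBody (superlevel Γ Φ u)) ≤
      volume.real (okounkovBody (superlevel Γ Φ t)) := by
  have hc : 0 ≤ (s - t) / (s - u) := div_nonneg (by linarith) (by linarith)
  have hle := measureReal_mono (μ := volume)
    (homothety_image_heightOneSlice_subset hadd hΦ hq hpos hut hts)
    (volume_okounkovBody_ne_top (hasLinearGrowth_superlevel hgrowth t))
  rwa [measureReal_def, Measure.addHaar_image_homothety, ENNReal.toReal_mul,
    ENNReal.toReal_ofReal (abs_nonneg _), Module.finrank_fin_fun, abs_of_nonneg (pow_nonneg hc d),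
    ← volume_okounkovBody_eq_volume_heightOneSlice] at hle

lemma antitone_volume_real_okounkovBody_superlevel (hgrowth : HasLinearGrowth Γ) :
    Antitone fun t => volume.real (okounkovBody (superlevel Γ Φ t)) := fun u _ hut =>
  measureReal_mono (okounkovBody_mono (superlevel_antitone hut))
    (volume_okounkovBody_ne_top (hasLinearGrowth_superlevel hgrowth u))

lemma okounkovBody_superlevel_eq_empty (hΓ : IsAdmissible Γ) (hΦ : IsSuperadditiveOn Γ Φ)
    (hbdd : IsLinearlyBoundedOn Γ Φ) (ht : thetaSup Γ Φ < t) :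
    okounkovBody (superlevel Γ Φ t) = ∅ :=
  okounkovBody_eq_empty fun _ => fst_eq_zero_of_mem_superlevel hΓ hΦ hbdd ht

lemma continuousWithinAt_volume_real_okounkovBody_superlevel (hΓ : IsAdmissible Γ)
    (hΦ : IsSuperadditiveOn Γ Φ) (hbdd : IsLinearlyBoundedOn Γ Φ) (ht : t ≠ thetaSup Γ Φ) :
    ContinuousWithinAt (fun t => volume.real (okounkovBody (superlevel Γ Φ t))) (Set.Iio t) t := by
  rcases ht.lt_or_gt with hlt | hgt
  · obtain ⟨q, hq, hpos, hts⟩ := exists_lt_div_of_lt_thetaSup hΓ hΦ hbdd hlt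
    set s := Φ q / q.1
    have hst : s - t ≠ 0 := (sub_pos.2 hts).ne'
    have hupper : Tendsto
        (fun u => volume.real (okounkovBody (superlevel Γ Φ t)) / ((s - t) / (s - u)) ^ d)
        (nhds t) (nhds (volume.real (okounkovBody (superlevel Γ Φ t)))) := by
      have hcont : ContinuousAt
          (fun u => volume.real (okounkovBody (superlevel Γ Φ t)) / ((s - t) / (s - u)) ^ d) t := by
        fun_prop (disch := simp [hst])
      simpa [ContinuousAt, div_self hst] using hcont
    refine tendsto_of_tendsto_of_tendsto_of_le_of_le' tendsto_const_nhds
      (hupper.mono_left nhdsWithin_le_nhds) ?_ ?_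
    all_goals filter_upwards [self_mem_nhdsWithin] with u hut
    · exact antitone_volume_real_okounkovBody_superlevel hΓ.2.1 (le_of_lt hut)
    · have hratio : 0 < (s - t) / (s - u) := div_pos (by linarith) (by linarith [hut.out])
      rw [le_div_iff₀' (pow_pos hratio d)]
      exact pow_mul_volume_real_okounkovBody_superlevel_le hΓ.1 hΓ.2.1 hΦ
        (mem_superlevel_div hq hpos) hpos (le_of_lt hut) hts
  · refine (continuousAt_const (y := (0 : ℝ)) |>.congr ?_).continuousWithinAt
    filter_upwards [lt_mem_nhds hgt] with u hu
    simp [okounkovBody_superlevel_eq_empty hΓ hΦ hbdd hu]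

end LeftContinuity

section TailFunctions

variable {H : ℝ → ℝ} {μ : Measure ℝ}

lemma exists_isProbabilityMeasure_measure_Ici_eq (hH : Antitone H)
    (hbot : Tendsto H atBot (nhds 1)) (htop : Tendsto H atTop (nhds 0)) :
    ∃ μ : Measure ℝ, IsProbabilityMeasure μ ∧
      ∀ t, ContinuousWithinAt H (Set.Iio t) t → μ (Set.Ici t) = ENNReal.ofReal (H t) := by
  have hmono : Monotone fun t => 1 - H t := fun s t hst => sub_le_sub_left (hH hst) 1
  set S := hmono.stieltjesFunction
  have hle : ∀ t, 1 - H t ≤ S t := fun t => hmono.le_rightLim le_rfl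
  have hge : ∀ t, S t ≤ 1 - H (t + 1) := fun t => hmono.rightLim_le (lt_add_one t)
  have hSbot : Tendsto S atBot (nhds 0) := by
    refine tendsto_of_tendsto_of_tendsto_of_le_of_le ?_ ?_ hle hge
    · simpa using hbot.const_sub 1
    · simpa using (hbot.comp (tendsto_atBot_add_const_right _ 1 tendsto_id)).const_sub 1
  have hStop : Tendsto S atTop (nhds 1) := by
    refine tendsto_of_tendsto_of_tendsto_of_le_of_le ?_ ?_ hle hge
    · simpa using htop.const_sub 1
    · simpa using (htop.comp (tendsto_atTop_add_const_right _ 1 tendsto_id)).const_sub 1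
  refine ⟨S.measure, S.isProbabilityMeasure hSbot hStop, fun t ht => ?_⟩
  have hleft : Function.leftLim S t = 1 - H t :=
    (leftLim_rightLim (hmono.tendsto_leftLim t)).trans
      (hmono.continuousWithinAt_Iio_iff_leftLim_eq.1 (continuousWithinAt_const.sub ht))
  rw [S.measure_Ici hStop, hleft, sub_sub_cancel]

lemma measure_compl_Icc_eq_zero [IsProbabilityMeasure μ] {a b : ℝ} (ha : μ (Set.Ici a) = 1)
    (hb : μ (Set.Ici b) = 0) : μ (Set.Icc a b)ᶜ = 0 := by
  rw [← Set.Ici_inter_Iic, Set.compl_inter, Set.compl_Iic]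
  exact measure_union_null ((prob_compl_eq_zero_iff measurableSet_Ici).2 ha)
    (measure_mono_null Set.Ioi_subset_Ici_self hb)

lemma tendsto_probabilityMeasure_of_tendsto_Ici {ι : Type*} {l : Filter ι}
    [l.IsCountablyGenerated] {ν : ι → ProbabilityMeasure ℝ} {μ : ProbabilityMeasure ℝ}
    {D : Set ℝ} (hD : Dense D)
    (h : ∀ t ∈ D, Tendsto (fun i => (ν i : Measure ℝ).real (Set.Ici t)) l
      (nhds ((μ : Measure ℝ).real (Set.Ici t)))) :
    Tendsto ν l (nhds μ) := by
  refine (isPiSystem_Ico_mem D D).tendsto_probabilityMeasure_of_tendsto_of_mem ?_ ?_ ?_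
  · rintro _ ⟨a, -, b, -, -, rfl⟩
    exact measurableSet_Ico
  · intro u hu x hx
    obtain ⟨y, z, ⟨hyx, hxz⟩, hyz⟩ := mem_nhds_iff_exists_Ioo_subset.1 (hu.mem_nhds hx)
    obtain ⟨a, haD, hya, hax⟩ := hD.exists_between hyx
    obtain ⟨b, hbD, hxb, hbz⟩ := hD.exists_between hxz
    exact ⟨Set.Ico a b, ⟨a, haD, b, hbD, hax.trans hxb, rfl⟩, Ico_mem_nhds hax hxb,
      (Set.Ico_subset_Ioo_left hya).trans <| (Set.Ioo_subset_Ioo_right hbz.le).trans hyz⟩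
  · rintro _ ⟨a, ha, b, hb, hab, rfl⟩
    have hIco : ∀ P : ProbabilityMeasure ℝ, (P (Set.Ico a b) : ℝ) =
        (P : Measure ℝ).real (Set.Ici a) - (P : Measure ℝ).real (Set.Ici b) := fun P => by
      rw [← measureReal_sdiff (Set.Ici_subset_Ici.2 hab.le) measurableSet_Ici, Set.Ici_sdiff_Ici]
      rfl
    rw [← NNReal.tendsto_coe]
    simpa only [hIco] using (h a ha).sub (h b hb)

lemma tendsto_integral_of_tendsto_Ici {ν : ℕ → Measure ℝ} [IsProbabilityMeasure μ]
    (hν : ∀ᶠ k in atTop, IsProbabilityMeasure (ν k)) {D : Set ℝ} (hD : Dense D)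
    (h : ∀ t ∈ D, Tendsto (fun k => (ν k).real (Set.Ici t)) atTop (nhds (μ.real (Set.Ici t))))
    (f : BoundedContinuousFunction ℝ ℝ) :
    Tendsto (fun k => ∫ x, f x ∂(ν k)) atTop (nhds (∫ x, f x ∂μ)) := by
  obtain ⟨K, hK⟩ := eventually_atTop.1 hν
  let P (k : ℕ) : ProbabilityMeasure ℝ := ⟨ν (k + K), hK _ (Nat.le_add_left K k)⟩
  have hP : Tendsto P atTop (nhds ⟨μ, inferInstance⟩) :=
    tendsto_probabilityMeasure_of_tendsto_Ici hD fun t ht =>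
      (h t ht).comp (tendsto_add_atTop_nat K)
  exact (tendsto_add_atTop_iff_nat K).1
    (ProbabilityMeasure.tendsto_iff_forall_integral_tendsto.1 hP f)

end TailFunctions

section EmpiricalMeasure

variable {d : ℕ} {Γ : Set (NPt d)} {Φ : NPt d → ℝ} {k : ℕ}

lemma empiricalMeasure_apply (hΓ : HasLinearGrowth Γ) (hk : k ≠ 0) {s : Set ℝ}
    (hs : MeasurableSet s) :
    empiricalMeasure Γ Φ k s = (Nat.card {α ∈ gradedPiece Γ k | Φ (k, α) / k ∈ s} : ℝ≥0∞) /
      Nat.card (gradedPiece Γ k) := by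
  have hfin : {α ∈ gradedPiece Γ k | Φ (k, α) / k ∈ s}.Finite :=
    (gradedPiece_finite hΓ hk).subset (Set.sep_subset _ _)
  have hcount : Measure.sum (fun α : gradedPiece Γ k => Measure.dirac (Φ (k, α.1) / k)) s =
      Nat.card {α ∈ gradedPiece Γ k | Φ (k, α) / k ∈ s} := by
    classical
    rw [Measure.sum_apply _ hs, Nat.card_coe_set_eq, ← ENat.toENNReal_coe, hfin.cast_ncard_eq,
      ← ENNReal.tsum_set_one]
    simp only [Measure.dirac_apply' _ hs]
    rw [tsum_subtype (gradedPiece Γ k) fun α => s.indicator 1 (Φ (k, α) / k),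
      tsum_subtype _ fun _ => (1 : ℝ≥0∞)]
    simp only [Set.indicator_apply, Pi.one_apply, Set.mem_ofPred_eq, ite_and]
  rw [div_eq_mul_inv, mul_comm, ← hcount]
  rfl

lemma isProbabilityMeasure_empiricalMeasure (hΓ : HasLinearGrowth Γ) (hk : k ≠ 0)
    (hne : (gradedPiece Γ k).Nonempty) : IsProbabilityMeasure (empiricalMeasure Γ Φ k) := by
  have hcard : Nat.card (gradedPiece Γ k) ≠ 0 :=
    (hne.ncard_pos (gradedPiece_finite hΓ hk)).ne'
  refine ⟨?_⟩
  rw [empiricalMeasure_apply hΓ hk .univ]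
  simp only [Set.mem_univ, and_true, Set.ofPred_mem_eq]
  exact ENNReal.div_self (Nat.cast_ne_zero.2 hcard) (ENNReal.natCast_ne_top _)

lemma empiricalMeasure_real_Ici (hΓ : HasLinearGrowth Γ) (hk : k ≠ 0) (t : ℝ) :
    (empiricalMeasure Γ Φ k).real (Set.Ici t) =
      (Nat.card (gradedPiece (superlevel Γ Φ t) k) : ℝ) / Nat.card (gradedPiece Γ k) := by
  have hpiece : {α ∈ gradedPiece Γ k | Φ (k, α) / k ∈ Set.Ici t} =
      gradedPiece (superlevel Γ Φ t) k :=
    Set.ext fun α => (mem_superlevel_iff_le_div (p := (k, α)) hk.bot_lt).symm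
  rw [measureReal_def, empiricalMeasure_apply hΓ hk measurableSet_Ici, hpiece,
    ENNReal.toReal_div, ENNReal.toReal_natCast, ENNReal.toReal_natCast]

end EmpiricalMeasure

section LimitMeasure

variable {d : ℕ} {Γ : Set (NPt d)} {Φ : NPt d → ℝ} {t : ℝ}

/-- The volume ratio `vol(Δ(Γ^{Φ,≥t})) / vol(Δ(Γ))`, the mass that the limit measure gives to
`[t, ∞)`. -/
noncomputable def volumeRatio (Γ : Set (NPt d)) (Φ : NPt d → ℝ) (t : ℝ) : ℝ :=
  volume.real (okounkovBody (superlevel Γ Φ t)) / volume.real (okounkovBody Γ)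

lemma volumeRatio_nonneg : 0 ≤ volumeRatio Γ Φ t :=
  div_nonneg measureReal_nonneg measureReal_nonneg

lemma ofReal_volumeRatio (hΓ : IsAdmissible Γ) (t : ℝ) :
    ENNReal.ofReal (volumeRatio Γ Φ t) =
      volume (okounkovBody (superlevel Γ Φ t)) / volume (okounkovBody Γ) := by
  rw [volumeRatio, ENNReal.ofReal_div_of_pos (volume_real_okounkovBody_pos hΓ),
    ofReal_measureReal (volume_okounkovBody_ne_top (hasLinearGrowth_superlevel hΓ.2.1 t)),
    ofReal_measureReal (volume_okounkovBody_ne_top hΓ.2.1)]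

lemma antitone_volumeRatio (hΓ : HasLinearGrowth Γ) : Antitone (volumeRatio Γ Φ) :=
  fun _ _ hst =>
    div_le_div_of_nonneg_right (antitone_volume_real_okounkovBody_superlevel hΓ hst)
      measureReal_nonneg

lemma volumeRatio_eq_one (hΓ : IsAdmissible Γ) {C : ℝ} (hC : ∀ p ∈ Γ, |Φ p| ≤ C * p.1)
    (ht : t ≤ -C) : volumeRatio Γ Φ t = 1 := by
  rw [volumeRatio, superlevel_eq hC ht, div_self (volume_real_okounkovBody_pos hΓ).ne']

lemma volumeRatio_eq_zero (hΓ : IsAdmissible Γ) (hΦ : IsSuperadditiveOn Γ Φ)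
    (hbdd : IsLinearlyBoundedOn Γ Φ) (ht : thetaSup Γ Φ < t) : volumeRatio Γ Φ t = 0 := by
  rw [volumeRatio, okounkovBody_superlevel_eq_empty hΓ hΦ hbdd ht, measureReal_empty, zero_div]

lemma tendsto_empiricalMeasure_real_Ici (hΓ : IsAdmissible Γ) (hΦ : IsSuperadditiveOn Γ Φ)
    (hbdd : IsLinearlyBoundedOn Γ Φ) (ht : t ≠ thetaSup Γ Φ) :
    Tendsto (fun k => (empiricalMeasure Γ Φ k).real (Set.Ici t)) atTop
      (nhds (volumeRatio Γ Φ t)) := by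
  have hreal := (eventually_ne_atTop 0).mono fun k hk =>
    empiricalMeasure_real_Ici (Φ := Φ) hΓ.2.1 hk t
  rcases ht.lt_or_gt with hlt | hgt
  · refine ((tendsto_card_gradedPiece_div_pow (isAdmissible_superlevel hΓ hΦ hbdd hlt)).div
      (tendsto_card_gradedPiece_div_pow hΓ) (volume_real_okounkovBody_pos hΓ).ne').congr' ?_
    filter_upwards [hreal, eventually_ne_atTop 0] with k hk hk₀
    rw [hk, Pi.div_apply, div_div_div_cancel_right₀ (pow_ne_zero d (Nat.cast_ne_zero.2 hk₀))]
  · rw [volumeRatio_eq_zero hΓ hΦ hbdd hgt]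
    refine tendsto_const_nhds.congr' ?_
    filter_upwards [hreal, eventually_ne_atTop 0] with k hk hk₀
    have hempty : gradedPiece (superlevel Γ Φ t) k = ∅ :=
      Set.eq_empty_of_forall_notMem fun _ hα =>
        hk₀ (fst_eq_zero_of_mem_superlevel hΓ hΦ hbdd hgt hα)
    rw [hk, hempty, Nat.card_coe_set_eq, Set.ncard_empty, Nat.cast_zero, zero_div]

lemma exists_isProbabilityMeasure_measure_Ici_eq_volumeRatio (hΓ : IsAdmissible Γ)
    (hΦ : IsSuperadditiveOn Γ Φ) (hbdd : IsLinearlyBoundedOn Γ Φ) :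
    ∃ μ : Measure ℝ, IsProbabilityMeasure μ ∧
      ∀ t, t ≠ thetaSup Γ Φ → μ (Set.Ici t) = ENNReal.ofReal (volumeRatio Γ Φ t) := by
  obtain ⟨C, -, hC⟩ := id hbdd
  obtain ⟨μ, hμ, htail⟩ := exists_isProbabilityMeasure_measure_Ici_eq
    (antitone_volumeRatio (Φ := Φ) hΓ.2.1)
    (tendsto_const_nhds.congr' ((eventually_le_atBot (-C)).mono fun _ ht =>
      (volumeRatio_eq_one hΓ hC ht).symm))
    (tendsto_const_nhds.congr' ((eventually_gt_atTop (thetaSup Γ Φ)).mono fun _ ht =>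
      (volumeRatio_eq_zero hΓ hΦ hbdd ht).symm))
  exact ⟨μ, hμ, fun t ht => htail t
    ((continuousWithinAt_volume_real_okounkovBody_superlevel hΓ hΦ hbdd ht).div_const _)⟩

lemma exists_isCompact_measure_compl_eq_zero (hΓ : IsAdmissible Γ)
    (hΦ : IsSuperadditiveOn Γ Φ) (hbdd : IsLinearlyBoundedOn Γ Φ) {μ : Measure ℝ}
    [IsProbabilityMeasure μ]
    (hμ : ∀ t, t ≠ thetaSup Γ Φ → μ (Set.Ici t) = ENNReal.ofReal (volumeRatio Γ Φ t)) :
    ∃ s : Set ℝ, IsCompact s ∧ μ sᶜ = 0 := by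
  obtain ⟨C, -, hC⟩ := id hbdd
  set θ := thetaSup Γ Φ
  obtain ⟨a, haC, haθ⟩ : ∃ a, a ≤ -C ∧ a < θ :=
    ⟨min (-C) (θ - 1), min_le_left _ _, (min_le_right _ _).trans_lt (sub_one_lt θ)⟩
  refine ⟨Set.Icc a (θ + 1), isCompact_Icc, measure_compl_Icc_eq_zero ?_ ?_⟩
  · rw [hμ a haθ.ne, volumeRatio_eq_one hΓ hC haC, ENNReal.ofReal_one]
  · rw [hμ _ (lt_add_one θ).ne', volumeRatio_eq_zero hΓ hΦ hbdd (lt_add_one θ),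
      ENNReal.ofReal_zero]

end LimitMeasure

theorem empiricalMeasure_tendsto_limit_general {d : ℕ} {Γ : Set (NPt d)} (hΓ : IsAdmissible Γ)
    {Φ : NPt d → ℝ} (hΦ : IsSuperadditiveOn Γ Φ) (hbdd : IsLinearlyBoundedOn Γ Φ) :
    (∃ K₀ : ℕ, ∀ k : ℕ, K₀ ≤ k → (gradedPiece Γ k).Nonempty) ∧
    ∃ μ : Measure ℝ, IsProbabilityMeasure μ ∧
      (∃ s : Set ℝ, IsCompact s ∧ μ sᶜ = 0) ∧
      (∀ f : BoundedContinuousFunction ℝ ℝ,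
        Tendsto (fun k : ℕ => ∫ x, f x ∂(empiricalMeasure Γ Φ k)) atTop
          (nhds (∫ x, f x ∂μ))) ∧
      (∀ t : ℝ, t ≠ thetaSup Γ Φ →
        μ (Set.Ici t) = volume (okounkovBody (superlevel Γ Φ t)) / volume (okounkovBody Γ)) := by
  obtain ⟨μ, hμ, htail⟩ := exists_isProbabilityMeasure_measure_Ici_eq_volumeRatio hΓ hΦ hbdd
  have hne := eventually_gradedPiece_nonempty hΓ
  refine ⟨eventually_atTop.1 hne, μ, hμ,
    exists_isCompact_measure_compl_eq_zero hΓ hΦ hbdd htail,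
    tendsto_integral_of_tendsto_Ici ?_ (dense_compl_singleton (thetaSup Γ Φ)) fun t ht => ?_,
    fun t ht => (htail t ht).trans (ofReal_volumeRatio hΓ t)⟩
  · filter_upwards [hne, eventually_ne_atTop 0] with k hk hk₀
    exact isProbabilityMeasure_empiricalMeasure hΓ.2.1 hk₀ hk
  · rw [measureReal_def, htail t ht, ENNReal.toReal_ofReal volumeRatio_nonneg]
    exact tendsto_empiricalMeasure_real_Ici hΓ hΦ hbdd ht

/-- For a superadditive and linearly bounded `Φ` on an admissible graded subsemigroup `Γ`,
the graded pieces are eventually nonempty, the empirical measures `μ_k` converge weakly to a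
compactly supported probability measure `μ`, and for `t < θ` one has
`μ([t,∞)) = vol(Δ(Γ^{Φ,≥t})) / vol(Δ(Γ))`. -/
theorem empiricalMeasure_tendsto_limit
    (d : ℕ) (hd : 1 ≤ d) (Γ : Set (NPt d)) (hΓ : IsAdmissible Γ)
    (Φ : NPt d → ℝ)
    (hsuper : ∀ x ∈ Γ, ∀ y ∈ Γ, Φ x + Φ y ≤ Φ (x + y))
    (hbdd : ∃ C : ℝ, 0 < C ∧ ∀ p ∈ Γ, |Φ p| ≤ C * p.1) :
    (∃ K₀ : ℕ, ∀ k : ℕ, K₀ ≤ k → (gradedPiece Γ k).Nonempty) ∧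
    ∃ μ : Measure ℝ, IsProbabilityMeasure μ ∧
      (∃ s : Set ℝ, IsCompact s ∧ μ sᶜ = 0) ∧
      (∀ f : BoundedContinuousFunction ℝ ℝ,
        Filter.Tendsto (fun k : ℕ => ∫ x, f x ∂(empiricalMeasure Γ Φ k)) Filter.atTop
          (nhds (∫ x, f x ∂μ))) ∧
      (∀ t : ℝ, t < thetaSup Γ Φ →
        μ (Set.Ici t) = volume (okounkovBody (superlevel Γ Φ t)) / volume (okounkovBody Γ)) := by
  obtain ⟨hne, μ, hμ, hsupp, hlim, htail⟩ := empiricalMeasure_tendsto_limit_general hΓ hsuper hbdd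
  exact ⟨hne, μ, hμ, hsupp, hlim, fun t ht => htail t ht.ne⟩
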